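/- Let x_1,…,x_n, z and q be indeterminates, and 0 ≤ r ≤ n integers. Then ∑_{σ∈{-1,+1}^n} ∏_{i=1}^n ((1-q x_i^{2σ_i})/(1-x_i^{2σ_i})) · ((1-q^r z x_i^{-σ_i})/(1-z x_i^{-σ_i})) · ∏_{1≤i<j≤n} (1-q x_i^{σ_i} x_j^{σ_j})/(1-x_i^{σ_i} x_j^{σ_j}) = q^{n r - binom(r,2)} (-q;q)_{n-r} ((q z^2;q^2)_r/(q z^2;q)_r) · _{2n+4}φ_{2n+3}[ z^2, q z, -q z, q^{-r}, {q z x_i, q z/x_i}_{i=1..n} ; z, -z, q^{r+1} z^2, {z x_i, z/x_i}_{i=1..n} ; q, -q^{r-n} ]. -/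

import Mathlib

open Finset

/-- The q-Pochhammer symbol `(x;q)_k = ∏_{l=0}^{k-1} (1 - x q^l)`. -/
def qPoch {F : Type*} [Field F] (x q : F) (k : ℕ) : F :=
  ∏ l ∈ Finset.range k, (1 - x * q ^ l)

/-- `x_i^{σ_i}`: the variable `x i` raised to the sign `σ i` (`true` = `+1`). -/
def sgnVar {F : Type*} [Field F] {n : ℕ} (x : Fin n → F) (σ : Fin n → Bool) (i : Fin n) : F :=
  if σ i then x i else (x i)⁻¹

/-!
As a function of one of its variables, a sum over all signs has no poles besides `0` and `∞`: a
numerator over the common denominator vanishes at the other variables, because there the residues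
of the two signs cancel. After multiplication by `∏ᵢ (1 - z xᵢ) (1 - z / xᵢ)` the left-hand side is
thus a polynomial of degree `1` in `t + t⁻¹` for each variable `t`, and it is determined by its
values at `t = z` and `t = q ^ r * z`. At these points one sign of `t` contributes nothing and the
sum becomes one of the same shape in the other variables, with `r - 1` in place of `r`. The
right-hand side has the same form, with a sum of the products
`∏ᵢ (1 - z q ^ k xᵢ) (1 - z q ^ k / xᵢ)`, and satisfies the same recurrences. For `r = 0` the sum
without weights is a constant, given by its behaviour as `t` tends to `0`.
-/

section

open Polynomial

variable {F : Type*} [Field F]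

section SignChoices

/-- All multisets obtained from `s` by replacing some of its elements by their inverses, one for
each choice of signs: the index set of the sum over `σ ∈ {±1}^n`. -/
def signChoices (s : Multiset F) : Multiset (Multiset F) :=
  (s.map fun a => {a, a⁻¹}).Sections

lemma signChoices_cons (a : F) (s : Multiset F) :
    signChoices (a ::ₘ s) =
      (signChoices s).map (a ::ₘ ·) + (signChoices s).map (a⁻¹ ::ₘ ·) := by
  simp [signChoices, Multiset.sections_cons, Multiset.insert_eq_cons]

lemma sum_map_signChoices_cons {M : Type*} [AddCommMonoid M] (f : Multiset F → M) (a : F)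
    (s : Multiset F) :
    ((signChoices (a ::ₘ s)).map f).sum =
      ((signChoices s).map fun m => f (a ::ₘ m)).sum +
        ((signChoices s).map fun m => f (a⁻¹ ::ₘ m)).sum := by
  simp only [signChoices_cons, Multiset.map_add, Multiset.sum_add, Multiset.map_map,
    Function.comp_apply]

lemma signChoices_inv_cons (a : F) (s : Multiset F) :
    signChoices (a⁻¹ ::ₘ s) = signChoices (a ::ₘ s) := by
  rw [signChoices_cons, signChoices_cons, inv_inv, add_comm]

lemma mem_signChoices {s m : Multiset F} :
    m ∈ signChoices s ↔ s.Rel (fun a b => b = a ∨ b = a⁻¹) m := by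
  simp [signChoices, Multiset.mem_sections, Multiset.rel_map_left]

lemma card_of_mem_signChoices {s m : Multiset F} (hm : m ∈ signChoices s) :
    m.card = s.card :=
  (Multiset.card_eq_card_of_rel (mem_signChoices.1 hm)).symm

lemma prod_map_of_mem_signChoices {s m : Multiset F} (hm : m ∈ signChoices s) {k : F → F}
    (hk : ∀ b, k b⁻¹ = k b) : (m.map k).prod = (s.map k).prod := by
  induction mem_signChoices.1 hm with
  | zero => rfl
  | cons hb h ih => obtain rfl | rfl := hb <;> simp [ih (mem_signChoices.2 h), hk]

lemma add_map_inv_of_mem_signChoices {s m : Multiset F} (hm : m ∈ signChoices s) :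
    m + m.map (·⁻¹) = s + s.map (·⁻¹) := by
  induction mem_signChoices.1 hm with
  | zero => rfl
  | cons hb h ih =>
    obtain rfl | rfl := hb <;>
      simp [Multiset.cons_add, Multiset.add_cons, ih (mem_signChoices.2 h), Multiset.cons_swap]

lemma sum_map_signChoices_ofFn {M : Type*} [AddCommMonoid M] {n : ℕ} (x : Fin n → F)
    (f : Multiset F → M) :
    ((signChoices (List.ofFn x : Multiset F)).map f).sum =
      ∑ σ : Fin n → Bool, f (List.ofFn (sgnVar x σ) : Multiset F) := by
  induction n generalizing f with
  | zero => simp [signChoices]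
  | succ n ih =>
    have ofFn_sgnVar_cons (b : Bool) (σ : Fin n → Bool) :
        (List.ofFn (sgnVar x (Fin.consEquiv (fun _ => Bool) (b, σ))) : Multiset F) =
          (if b then x 0 else (x 0)⁻¹) ::ₘ
            (List.ofFn (sgnVar (fun i => x i.succ) σ) : Multiset F) := by
      rw [List.ofFn_succ, ← Multiset.cons_coe]
      rfl
    rw [← (Fin.consEquiv fun _ => Bool).sum_comp, Fintype.sum_prod_type, Fintype.sum_bool,
      List.ofFn_succ, ← Multiset.cons_coe, sum_map_signChoices_cons, ih, ih]
    simp only [ofFn_sgnVar_cons, if_true, Bool.false_eq_true, if_false]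

end SignChoices

section InvSeparated

/-- The elements of `s` and their inverses are nonzero and pairwise distinct: the position of the
variables in which no denominator of `signSum` vanishes. -/
def InvSeparated (s : Multiset F) : Prop :=
  0 ∉ s ∧ (s + s.map (·⁻¹)).Nodup

lemma invSeparated_cons {a : F} {s : Multiset F} :
    InvSeparated (a ::ₘ s) ↔
      a ≠ 0 ∧ a ^ 2 ≠ 1 ∧ (∀ b ∈ s, a ≠ b ∧ a * b ≠ 1) ∧ InvSeparated s := by
  have inv_mem (b : F) : (∃ c ∈ s, c⁻¹ = b) ↔ b⁻¹ ∈ s := by simp [inv_eq_iff_eq_inv]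
  have mul_eq_one (ha : a ≠ 0) (b : F) : a * b = 1 ↔ a⁻¹ = b := by
    rw [mul_comm, mul_eq_one_iff_eq_inv₀ ha, eq_comm]
  have sq_eq_one (ha : a ≠ 0) : a ^ 2 = 1 ↔ a⁻¹ = a := by rw [sq, mul_eq_one ha]
  simp only [InvSeparated, Multiset.map_cons, Multiset.cons_add, Multiset.add_cons,
    Multiset.nodup_cons, Multiset.mem_cons, Multiset.mem_add, Multiset.mem_map, inv_mem, inv_inv]
  by_cases ha : a = 0
  · simp [ha]
  · simp only [ne_eq, mul_eq_one ha, sq_eq_one ha]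
    grind

lemma invSeparated_ofFn {n : ℕ} {x : Fin n → F} (hx0 : ∀ i, x i ≠ 0) (hx2 : ∀ i, x i ^ 2 ≠ 1)
    (hxx : ∀ i j, i ≠ j → x i * x j ≠ 1 ∧ x i ≠ x j) :
    InvSeparated (List.ofFn x : Multiset F) := by
  induction n with
  | zero => simp [InvSeparated]
  | succ n ih =>
    rw [List.ofFn_succ, ← Multiset.cons_coe, invSeparated_cons]
    refine ⟨hx0 0, hx2 0, fun b hb => ?_, ih (fun i => hx0 i.succ) (fun i => hx2 i.succ)
      fun i j hij => hxx _ _ (Fin.succ_injective n |>.ne hij)⟩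
    obtain ⟨i, rfl⟩ := List.mem_ofFn.1 (Multiset.mem_coe.1 hb)
    exact (hxx 0 i.succ (Fin.succ_ne_zero i).symm).symm

lemma InvSeparated.of_mem_signChoices {s m : Multiset F} (hs : InvSeparated s)
    (hm : m ∈ signChoices s) : InvSeparated m := by
  have h := add_map_inv_of_mem_signChoices hm
  refine ⟨fun h0 => hs.1 ?_, by rw [h]; exact hs.2⟩
  have : (0 : F) ∈ s + s.map (·⁻¹) := by rw [← h]; exact Multiset.mem_add.2 (.inl h0)
  simpa using this

lemma InvSeparated.inv_cons {a : F} {s : Multiset F} (h : InvSeparated (a ::ₘ s)) :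
    InvSeparated (a⁻¹ ::ₘ s) := by
  have hs : s.Rel (fun a b => b = a ∨ b = a⁻¹) s :=
    Multiset.rel_refl_of_refl_on fun _ _ => .inl rfl
  exact h.of_mem_signChoices (mem_signChoices.2 (.cons (.inr rfl) hs))

lemma InvSeparated.mono {s t : Multiset F} (ht : InvSeparated t) (h : s ≤ t) : InvSeparated s :=
  ⟨fun h0 => ht.1 (Multiset.mem_of_le h h0),
    Multiset.nodup_of_le (add_le_add h (Multiset.map_le_map h)) ht.2⟩

lemma InvSeparated.cons_cons {a b : F} {s : Multiset F} (ha : InvSeparated (a ::ₘ s))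
    (hb : InvSeparated (b ::ₘ s)) (hab : a ≠ b) (hab_mul : a * b ≠ 1) :
    InvSeparated (a ::ₘ b ::ₘ s) := by
  obtain ⟨ha0, ha2, has, -⟩ := invSeparated_cons.1 ha
  exact invSeparated_cons.2 ⟨ha0, ha2, Multiset.forall_mem_cons.2 ⟨⟨hab, hab_mul⟩, has⟩, hb⟩

lemma InvSeparated.nodup_one_cons {s : Multiset F} (hs : InvSeparated s) :
    (1 ::ₘ (s + s.map (·⁻¹))).Nodup := by
  refine Multiset.nodup_cons.2 ⟨fun h => ?_, hs.2⟩
  have h1 : (1 : F) ∈ s := by simpa [inv_eq_one] using h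
  exact Multiset.disjoint_left.1 (Multiset.nodup_add.1 hs.2).2.2 h1
    (Multiset.mem_map.2 ⟨1, h1, inv_one⟩)

end InvSeparated

section SignSum

/-- The factor `(1 - q p) / (1 - p)` which a product `p` of two variables contributes. -/
def qFactor (q p : F) : F :=
  (1 - q * p) / (1 - p)

/-- The summand `∏ᵢ g(xᵢ) ∏_{i ≤ j} (1 - q xᵢ xⱼ) / (1 - xᵢ xⱼ)` attached to the multiset of the
`xᵢ`; the unordered pairs in `Multiset.sym2` include the diagonal ones. -/
def signWeight (q : F) (g : F → F) (m : Multiset F) : F :=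
  (m.map g).prod * (m.sym2.map fun p => qFactor q p.mul).prod

/-- The sum of `signWeight` over all choices of signs for the exponents of the variables. -/
def signSum (q : F) (g : F → F) (s : Multiset F) : F :=
  ((signChoices s).map (signWeight q g)).sum

lemma signWeight_cons (q : F) (g : F → F) (a : F) (m : Multiset F) :
    signWeight q g (a ::ₘ m) =
      g a * qFactor q (a * a) * (m.map fun b => qFactor q (a * b)).prod * signWeight q g m := by
  simp only [signWeight, Multiset.map_cons, Multiset.prod_cons, Multiset.sym2_cons,
    Multiset.map_add, Multiset.prod_add, Multiset.map_map, Function.comp_def, Sym2.mul_mk]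
  ring

lemma signWeight_eq_prod_mul (q : F) {g h k : F → F} {m : Multiset F}
    (hk : ∀ b ∈ m, k b = h b * g b) :
    signWeight q k m = (m.map h).prod * signWeight q g m := by
  rw [signWeight, signWeight, Multiset.map_congr rfl hk, Multiset.prod_map_mul, mul_assoc]

lemma signSum_cons (q : F) (g : F → F) (a : F) (s : Multiset F) :
    signSum q g (a ::ₘ s) =
      ((signChoices s).map fun m => signWeight q g (a ::ₘ m)).sum +
        ((signChoices s).map fun m => signWeight q g (a⁻¹ ::ₘ m)).sum :=
  sum_map_signChoices_cons _ a s

lemma signSum_eq_prod_mul (q : F) {g h k : F → F} {s : Multiset F} (hh : ∀ b, h b⁻¹ = h b)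
    (hk : ∀ m ∈ signChoices s, ∀ b ∈ m, k b = h b * g b) :
    signSum q k s = (s.map h).prod * signSum q g s := by
  rw [signSum, signSum, ← Multiset.sum_map_mul_left]
  refine congrArg _ (Multiset.map_congr rfl fun m hm => ?_)
  rw [signWeight_eq_prod_mul q (hk m hm), prod_map_of_mem_signChoices hm hh]

lemma signWeight_ofFn (q : F) (g : F → F) {n : ℕ} (y : Fin n → F) :
    signWeight q g (List.ofFn y : Multiset F) =
      (∏ i, qFactor q (y i ^ 2) * g (y i)) * ∏ i, ∏ j ∈ Ioi i, qFactor q (y i * y j) := by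
  induction n with
  | zero => simp [signWeight]
  | succ n ih =>
    rw [List.ofFn_succ, ← Multiset.cons_coe, signWeight_cons, ih, ← sq, Fin.prod_univ_succ,
      Fin.prod_univ_succ fun i => ∏ j ∈ Ioi i, qFactor q (y i * y j)]
    simp only [Fin.prod_Ioi_zero, Fin.prod_Ioi_succ, Multiset.map_coe, Multiset.prod_coe,
      List.map_ofFn, List.prod_ofFn, Function.comp_apply]
    ring

lemma signSum_ofFn (q : F) (g : F → F) {n : ℕ} (x : Fin n → F) :
    signSum q g (List.ofFn x : Multiset F) =
      ∑ σ : Fin n → Bool,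
        (∏ i, (1 - q * sgnVar x σ i ^ 2) / (1 - sgnVar x σ i ^ 2) * g (sgnVar x σ i)) *
          ∏ i, ∏ j ∈ Ioi i,
            (1 - q * sgnVar x σ i * sgnVar x σ j) / (1 - sgnVar x σ i * sgnVar x σ j) := by
  rw [signSum, sum_map_signChoices_ofFn]
  simp only [signWeight_ofFn, qFactor, mul_assoc q]

end SignSum

section Numerators

/-- The numerator of the part of `signSum q g (X ::ₘ s)` in which the variable `X` has exponent `1`,
over the denominator `signDenom s`; the polynomial `G` is `g` with the poles at `0` cleared. -/
noncomputable def plusNumer (q : F) (g : F → F) (G : F[X]) (s : Multiset F) : F[X] :=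
  ((signChoices s).map fun m => C (signWeight q g m) *
    ((1 - C q * X ^ 2) * G * (m.map fun b => (1 - C (q * b) * X) * (1 - C b⁻¹ * X)).prod)).sum

/-- The common denominator of the terms of `signSum q g (X ::ₘ s)` as functions of `X`. -/
noncomputable def signDenom (s : Multiset F) : F[X] :=
  (1 - X ^ 2) * (s.map fun b => (1 - C b * X) * (1 - C b⁻¹ * X)).prod

lemma eval_plusNumer (q : F) (g : F → F) (G : F[X]) (s : Multiset F) (T : F) :
    (plusNumer q g G s).eval T = ((signChoices s).map fun m => signWeight q g m *
      ((1 - q * T ^ 2) * G.eval T *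
        (m.map fun b => (1 - q * b * T) * (1 - b⁻¹ * T)).prod)).sum := by
  simp [plusNumer, eval_multisetSum, eval_multiset_prod]

lemma eval_signDenom (s : Multiset F) (T : F) :
    (signDenom s).eval T = (1 - T ^ 2) * (s.map fun b => (1 - b * T) * (1 - b⁻¹ * T)).prod := by
  simp [signDenom, eval_multiset_prod]

lemma plusNumer_inv_cons (q : F) (g : F → F) (G : F[X]) (a : F) (s : Multiset F) :
    plusNumer q g G (a⁻¹ ::ₘ s) = plusNumer q g G (a ::ₘ s) := by
  rw [plusNumer, plusNumer, signChoices_inv_cons]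

lemma eval_signDenom_of_mem_signChoices {s m : Multiset F} (hm : m ∈ signChoices s) (T : F) :
    (signDenom m).eval T = (signDenom s).eval T := by
  rw [eval_signDenom, eval_signDenom, prod_map_of_mem_signChoices hm fun b => by
    rw [inv_inv, mul_comm]]

lemma eval_signDenom_ne_zero {T : F} {s : Multiset F} (h : InvSeparated (T ::ₘ s)) :
    (signDenom s).eval T ≠ 0 := by
  obtain ⟨-, hT2, hTb, hs⟩ := invSeparated_cons.1 h
  rw [eval_signDenom]
  refine mul_ne_zero (sub_ne_zero.2 hT2.symm) (Multiset.prod_ne_zero fun h0 => ?_)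
  obtain ⟨b, hb, hb0⟩ := Multiset.mem_map.1 h0
  have hb_ne : b ≠ 0 := fun h => hs.1 (h ▸ hb)
  rcases mul_eq_zero.1 hb0 with h0 | h0
  · exact (hTb b hb).2 (by linear_combination -h0)
  · refine (hTb b hb).1 ?_
    field_simp at h0
    linear_combination -h0

lemma pow_mul_eval_signDenom_inv {T : F} (hT : T ≠ 0) {s : Multiset F} (hs : 0 ∉ s) :
    T ^ (2 * s.card + 2) * (signDenom s).eval T⁻¹ = -(signDenom s).eval T := by
  simp only [eval_signDenom]
  induction s using Multiset.induction with
  | empty => simp; field_simp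
  | cons b s ih =>
    have hb : b ≠ 0 := fun h => hs (by simp [h])
    have hb_factor : T ^ 2 * ((1 - b * T⁻¹) * (1 - b⁻¹ * T⁻¹)) = (1 - b * T) * (1 - b⁻¹ * T) := by
      field_simp
      ring
    have ih := ih fun h => hs (Multiset.mem_cons_of_mem h)
    simp only [Multiset.map_cons, Multiset.prod_cons, Multiset.card_cons] at ih ⊢
    linear_combination (1 - b * T) * (1 - b⁻¹ * T) * ih +
      T ^ (2 * s.card + 2) * (1 - T⁻¹ ^ 2) *
        (s.map fun b => (1 - b * T⁻¹) * (1 - b⁻¹ * T⁻¹)).prod * hb_factor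

lemma natDegree_plusNumer_factor_le (q b : F) :
    ((1 - C (q * b) * X) * (1 - C b⁻¹ * X)).natDegree ≤ 2 := by
  compute_degree

lemma natDegree_prod_plusNumer_factor_le (q : F) (m : Multiset F) :
    (m.map fun b => (1 - C (q * b) * X) * (1 - C b⁻¹ * X)).prod.natDegree ≤ 2 * m.card := by
  refine (natDegree_multiset_prod_le _).trans
    ((Multiset.sum_le_card_nsmul _ 2 fun d hd => ?_).trans
      (by rw [Multiset.card_map, Multiset.card_map, smul_eq_mul, mul_comm]))
  simp only [Multiset.map_map] at hd
  obtain ⟨b, -, rfl⟩ := Multiset.mem_map.1 hd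
  exact natDegree_plusNumer_factor_le q b

lemma natDegree_plusNumer_le (q : F) (g : F → F) {G : F[X]} {e : ℕ} (hG : G.natDegree ≤ 2 * e)
    (s : Multiset F) : (plusNumer q g G s).natDegree ≤ 2 * e + 2 * s.card + 2 := by
  refine Multiset.sum_induction (fun p : F[X] => p.natDegree ≤ 2 * e + 2 * s.card + 2) _
    (fun _ _ => natDegree_add_le_of_degree_le) (by simp) fun p hp => ?_
  obtain ⟨m, hm, rfl⟩ := Multiset.mem_map.1 hp
  have h_quad : (1 - C q * X ^ 2 : F[X]).natDegree ≤ 2 := by compute_degree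
  have h_prod := natDegree_prod_plusNumer_factor_le q m
  rw [card_of_mem_signChoices hm] at h_prod
  refine (natDegree_C_mul_le _ _).trans
    ((natDegree_mul_le_of_le (natDegree_mul_le_of_le h_quad hG) h_prod).trans ?_)
  omega

end Numerators

section Antisymmetrization

lemma eval_reflect_of_natDegree_le {p : F[X]} {N : ℕ} (hp : p.natDegree ≤ N) {x : F}
    (hx : x ≠ 0) : (p.reflect N).eval x = x ^ N * p.eval x⁻¹ := by
  let _ := invertibleOfNonzero (inv_ne_zero hx)
  have h := eval₂_reflect_mul_pow (RingHom.id F) x⁻¹ N p hp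
  rw [invOf_eq_inv, inv_inv, eval₂_id, eval₂_id, inv_pow] at h
  rw [← h, mul_comm, inv_mul_cancel_right₀ (pow_ne_zero N hx)]

/-- The numerator over `signDenom s` of `signSum q g (X ::ₘ s)`, up to the power `X ^ e`; changing
the sign of the exponent of `X` amounts to reflecting the coefficients. -/
noncomputable def signSumNumer (q : F) (g : F → F) (G : F[X]) (e : ℕ) (s : Multiset F) : F[X] :=
  plusNumer q g G s - (plusNumer q g G s).reflect (2 * e + 2 * s.card + 2)

variable {q : F} {g : F → F} {G : F[X]} {e : ℕ}

lemma natDegree_signSumNumer_le (hG : G.natDegree ≤ 2 * e) (s : Multiset F) :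
    (signSumNumer q g G e s).natDegree ≤ 2 * e + 2 * s.card + 2 :=
  (natDegree_sub_le_of_le (natDegree_plusNumer_le q g hG s) (natDegree_reflect_le.trans
    (max_le le_rfl (natDegree_plusNumer_le q g hG s)))).trans (max_self _).le

lemma eval_signSumNumer (hG : G.natDegree ≤ 2 * e) (s : Multiset F) {T : F} (hT : T ≠ 0) :
    (signSumNumer q g G e s).eval T = (plusNumer q g G s).eval T -
      T ^ (2 * e + 2 * s.card + 2) * (plusNumer q g G s).eval T⁻¹ := by
  rw [signSumNumer, eval_sub, eval_reflect_of_natDegree_le (natDegree_plusNumer_le q g hG s) hT]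

lemma eval_signSumNumer_inv (hG : G.natDegree ≤ 2 * e) (s : Multiset F) {T : F} (hT : T ≠ 0) :
    T ^ (2 * e + 2 * s.card + 2) * (signSumNumer q g G e s).eval T⁻¹ =
      -(signSumNumer q g G e s).eval T := by
  rw [eval_signSumNumer hG s hT, eval_signSumNumer hG s (inv_ne_zero hT), inv_inv, inv_pow]
  field_simp
  ring

lemma eval_one_signSumNumer (hG : G.natDegree ≤ 2 * e) (s : Multiset F) :
    (signSumNumer q g G e s).eval 1 = 0 := by
  rw [eval_signSumNumer hG s one_ne_zero]
  simp

lemma eval_plusNumer_eq (hg : ∀ t ≠ 0, G.eval t = t ^ e * g t) {T : F} {s : Multiset F}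
    (hs : InvSeparated (T ::ₘ s)) :
    (plusNumer q g G s).eval T = T ^ e * (signDenom s).eval T *
      ((signChoices s).map fun m => signWeight q g (T ::ₘ m)).sum := by
  rw [eval_plusNumer, ← Multiset.sum_map_mul_left]
  refine congrArg _ (Multiset.map_congr rfl fun m hm => ?_)
  have hTm : InvSeparated (T ::ₘ m) :=
    hs.of_mem_signChoices (mem_signChoices.2 (.cons (.inl rfl) (mem_signChoices.1 hm)))
  obtain ⟨hT, hT2, hTb, -⟩ := invSeparated_cons.1 hTm
  have hT2' : 1 - T ^ 2 ≠ 0 := sub_ne_zero.2 hT2.symm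
  have prod_factor : (m.map fun b => (1 - q * b * T) * (1 - b⁻¹ * T)).prod =
      (m.map fun b => (1 - b * T) * (1 - b⁻¹ * T)).prod *
        (m.map fun b => qFactor q (T * b)).prod := by
    rw [← Multiset.prod_map_mul]
    refine congrArg _ (Multiset.map_congr rfl fun b hb => ?_)
    have : 1 - b * T ≠ 0 := sub_ne_zero.2 (mul_comm b T ▸ (hTb b hb).2.symm)
    rw [qFactor, mul_comm T b]
    field_simp
  have diag_factor : 1 - q * T ^ 2 = (1 - T ^ 2) * qFactor q (T * T) := by
    rw [qFactor, ← sq]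
    field_simp
  rw [← eval_signDenom_of_mem_signChoices hm, eval_signDenom, signWeight_cons, prod_factor,
    diag_factor, hg T hT]
  ring

lemma eval_signSumNumer_eq (hg : ∀ t ≠ 0, G.eval t = t ^ e * g t) (hG : G.natDegree ≤ 2 * e)
    {T : F} {s : Multiset F} (hs : InvSeparated (T ::ₘ s)) :
    (signSumNumer q g G e s).eval T =
      T ^ e * (signDenom s).eval T * signSum q g (T ::ₘ s) := by
  obtain ⟨hT, -, -, hs0⟩ := invSeparated_cons.1 hs
  have pow_split : T ^ (2 * e + 2 * s.card + 2) * T⁻¹ ^ e = T ^ e * T ^ (2 * s.card + 2) := by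
    rw [inv_pow]
    field_simp
    ring
  rw [eval_signSumNumer hG s hT, eval_plusNumer_eq hg hs, eval_plusNumer_eq hg hs.inv_cons,
    signSum_cons]
  linear_combination (-(signDenom s).eval T⁻¹ * pow_split -
    T ^ e * pow_mul_eval_signDenom_inv hT hs0.1) *
      ((signChoices s).map fun m => signWeight q g (T⁻¹ ::ₘ m)).sum

-- Only the choices with exponent `-1` at `x` survive the factor `1 - b⁻¹ * X` at `X = x`.
lemma eval_plusNumer_self (hg : ∀ t ≠ 0, G.eval t = t ^ e * g t) {x : F} {s : Multiset F}
    (hs : InvSeparated (x ::ₘ s)) :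
    (plusNumer q g G (x ::ₘ s)).eval x = x ^ (e + s.card + 2) *
      ((signChoices s).map fun m => (q - 1) * (g x * g x⁻¹) *
        ((1 - q * x ^ 2) * (1 - q * x⁻¹ ^ 2)) * signWeight q g m *
        (m.map fun b => -b⁻¹ * ((1 - q * b * x) * (1 - q * b * x⁻¹))).prod).sum := by
  have plus_eq_zero : ((signChoices s).map fun m => signWeight q g (x ::ₘ m) *
      ((1 - q * x ^ 2) * G.eval x * ((x ::ₘ m).map fun b =>
        (1 - q * b * x) * (1 - b⁻¹ * x)).prod)).sum = 0 := by
    simp [inv_mul_cancel₀ (invSeparated_cons.1 hs).1]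
  rw [eval_plusNumer, sum_map_signChoices_cons, plus_eq_zero, zero_add,
    ← Multiset.sum_map_mul_left]
  refine congrArg _ (Multiset.map_congr rfl fun m hm => ?_)
  have hxm : InvSeparated (x ::ₘ m) :=
    hs.of_mem_signChoices (mem_signChoices.2 (.cons (.inl rfl) (mem_signChoices.1 hm)))
  obtain ⟨hx, hx2, hxb, hm0⟩ := invSeparated_cons.1 hxm
  have prod_factor : (m.map fun b => qFactor q (x⁻¹ * b)).prod *
      (m.map fun b => (1 - q * b * x) * (1 - b⁻¹ * x)).prod =
      x ^ s.card * (m.map fun b => -b⁻¹ * ((1 - q * b * x) * (1 - q * b * x⁻¹))).prod := by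
    rw [← card_of_mem_signChoices hm, ← Multiset.prod_replicate, ← Multiset.map_const',
      ← Multiset.prod_map_mul, ← Multiset.prod_map_mul]
    refine congrArg _ (Multiset.map_congr rfl fun b hb => ?_)
    have hb0 : b ≠ 0 := fun h => hm0.1 (h ▸ hb)
    have hxb' : x - b ≠ 0 := sub_ne_zero.2 (hxb b hb).1
    rw [qFactor]
    field_simp
    ring
  have diag_factor : (1 - x ^ 2) * qFactor q (x⁻¹ * x⁻¹) = -x ^ 2 * (1 - q * x⁻¹ ^ 2) := by
    have : x ^ 2 - 1 ≠ 0 := sub_ne_zero.2 hx2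
    rw [qFactor]
    field_simp
    ring
  rw [signWeight_cons, hg x hx, Multiset.map_cons, Multiset.prod_cons, inv_inv, mul_assoc q x⁻¹,
    inv_mul_cancel₀ hx]
  linear_combination (1 - q) * (1 - q * x ^ 2) * x ^ e * g x * g x⁻¹ * signWeight q g m *
    ((1 - x ^ 2) * qFactor q (x⁻¹ * x⁻¹) * prod_factor + x ^ s.card *
      (m.map fun b => -b⁻¹ * ((1 - q * b * x) * (1 - q * b * x⁻¹))).prod * diag_factor)

lemma eval_signSumNumer_eq_zero (hg : ∀ t ≠ 0, G.eval t = t ^ e * g t)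
    (hG : G.natDegree ≤ 2 * e) {x : F} {s : Multiset F} (hs : InvSeparated s) (hx : x ∈ s) :
    (signSumNumer q g G e s).eval x = 0 := by
  obtain ⟨s, rfl⟩ := Multiset.exists_cons_of_mem hx
  have hx0 := (invSeparated_cons.1 hs).1
  rw [eval_signSumNumer hG _ hx0, ← plusNumer_inv_cons, eval_plusNumer_self hg hs.inv_cons,
    plusNumer_inv_cons, eval_plusNumer_self hg hs, Multiset.card_cons, inv_inv, mul_comm (g x⁻¹),
    mul_comm (1 - q * x⁻¹ ^ 2)]
  simp only [mul_comm (1 - q * _ * x⁻¹)]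
  have pow_split : x ^ (2 * e + 2 * (s.card + 1) + 2) =
      x ^ (e + s.card + 2) * x ^ (e + s.card + 2) := by ring
  rw [pow_split, inv_pow x (e + s.card + 2), mul_assoc (x ^ _),
    mul_inv_cancel_left₀ (pow_ne_zero _ hx0), sub_self]

lemma eq_zero_of_antisymmetric {p : F[X]} {N : ℕ} (h_one : p.eval 1 = 0)
    (h_symm : ∀ T ≠ 0, T ^ N * p.eval T⁻¹ = -p.eval T) {E : Multiset F} (hE : InvSeparated E)
    (hp : p.natDegree ≤ 2 * E.card) (h_eval : ∀ T ∈ E, p.eval T = 0) : p = 0 := by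
  by_contra hp0
  have isRoot : ∀ T ∈ 1 ::ₘ (E + E.map (·⁻¹)), p.IsRoot T := by
    intro T hT
    rcases Multiset.mem_cons.1 hT with rfl | hT
    · exact h_one
    rcases Multiset.mem_add.1 hT with hT | hT
    · exact h_eval T hT
    obtain ⟨U, hU, rfl⟩ := Multiset.mem_map.1 hT
    have hU0 : U ≠ 0 := fun h => hE.1 (h ▸ hU)
    have h := h_symm U hU0
    rw [h_eval U hU, neg_zero] at h
    exact (mul_eq_zero.1 h).resolve_left (pow_ne_zero N hU0)
  have card_le := Multiset.card_le_card ((Multiset.le_iff_subset hE.nodup_one_cons).2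
    fun T hT => (mem_roots hp0).2 (isRoot T hT))
  rw [Multiset.card_cons, Multiset.card_add, Multiset.card_map] at card_le
  have := p.card_roots'
  omega

end Antisymmetrization

section Interpolation

lemma natDegree_signDenom_le (s : Multiset F) : (signDenom s).natDegree ≤ 2 * s.card + 2 := by
  have h_prod := natDegree_prod_plusNumer_factor_le 1 s
  simp only [one_mul] at h_prod
  have h_quad : (1 - X ^ 2 : F[X]).natDegree ≤ 2 := by compute_degree
  exact (natDegree_mul_le_of_le h_quad h_prod).trans (add_comm _ _).le

lemma eval_signDenom_eq_zero {T : F} {s : Multiset F} (hT : T ≠ 0) (hs : T ∈ s) :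
    (signDenom s).eval T = 0 := by
  rw [eval_signDenom, Multiset.prod_eq_zero (Multiset.mem_map.2 ⟨T, hs, ?_⟩), mul_zero]
  rw [inv_mul_cancel₀ hT, sub_self, mul_zero]

variable {q : F} {g : F → F} {G : F[X]} {e : ℕ}

-- The zeros of `signSumNumer` at the elements of `s` say that `signSum q g (X ::ₘ s)` has no poles
-- outside `0`, so that it is determined by `e + 1` values.
lemma signSumNumer_eq_signDenom_mul (hg : ∀ t ≠ 0, G.eval t = t ^ e * g t)
    (hG : G.natDegree ≤ 2 * e) {E s : Multiset F} (hEs : InvSeparated (E + s))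
    (hE : E.card = e + 1) {R : F[X]} (hR : R.natDegree ≤ 2 * e)
    (hR_symm : ∀ T ≠ 0, T ^ (2 * e) * R.eval T⁻¹ = R.eval T)
    (h_eval : ∀ T ∈ E, T ^ e * signSum q g (T ::ₘ s) = R.eval T) :
    signSumNumer q g G e s = signDenom s * R := by
  have hs : InvSeparated s := hEs.mono (Multiset.le_add_left _ _)
  refine sub_eq_zero.1 (eq_zero_of_antisymmetric (N := 2 * e + 2 * s.card + 2) ?_ ?_ hEs ?_ ?_)
  · simp [eval_one_signSumNumer hG, eval_signDenom]
  · intro T hT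
    rw [eval_sub, eval_sub, eval_mul, eval_mul]
    linear_combination eval_signSumNumer_inv hG s hT -
      (signDenom s).eval T⁻¹ * T ^ (2 * s.card + 2) * hR_symm T hT -
      R.eval T * pow_mul_eval_signDenom_inv hT hs.1
  · refine (natDegree_sub_le_of_le (natDegree_signSumNumer_le hG s)
      (natDegree_mul_le_of_le (natDegree_signDenom_le s) hR)).trans ?_
    rw [Multiset.card_add, hE]
    omega
  · intro T hT
    rw [eval_sub, eval_mul]
    rcases Multiset.mem_add.1 hT with hT | hT
    · have hTs : InvSeparated (T ::ₘ s) := hEs.mono (by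
        rw [← Multiset.singleton_add]
        exact add_le_add_left (Multiset.singleton_le.2 hT) s)
      rw [eval_signSumNumer_eq hg hG hTs, ← h_eval T hT]
      ring
    · have hT0 : T ≠ 0 := fun h => hs.1 (h ▸ hT)
      rw [eval_signSumNumer_eq_zero hg hG hs hT, eval_signDenom_eq_zero hT0 hT, zero_mul, sub_self]

lemma pow_mul_signSum_cons_eq_eval (hg : ∀ t ≠ 0, G.eval t = t ^ e * g t)
    (hG : G.natDegree ≤ 2 * e) {E s : Multiset F} (hEs : InvSeparated (E + s))
    (hE : E.card = e + 1) {R : F[X]} (hR : R.natDegree ≤ 2 * e)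
    (hR_symm : ∀ T ≠ 0, T ^ (2 * e) * R.eval T⁻¹ = R.eval T)
    (h_eval : ∀ T ∈ E, T ^ e * signSum q g (T ::ₘ s) = R.eval T) {t : F}
    (ht : InvSeparated (t ::ₘ s)) : t ^ e * signSum q g (t ::ₘ s) = R.eval t := by
  have h := eval_signSumNumer_eq (q := q) hg hG ht
  rw [signSumNumer_eq_signDenom_mul hg hG hEs hE hR hR_symm h_eval, eval_mul] at h
  exact mul_left_cancel₀ (eval_signDenom_ne_zero ht) (by linear_combination -h)

end Interpolation

section qPoch

lemma qPoch_succ (x q : F) (k : ℕ) : qPoch x q (k + 1) = qPoch x q k * (1 - x * q ^ k) :=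
  prod_range_succ _ k

lemma qPoch_succ' (x q : F) (k : ℕ) : qPoch x q (k + 1) = (1 - x) * qPoch (x * q) q k := by
  rw [qPoch, prod_range_succ', pow_zero, mul_one, mul_comm, qPoch]
  exact congrArg _ (prod_congr rfl fun l _ => by ring)

lemma qPoch_mul_one_sub (x q : F) (k : ℕ) :
    qPoch x q k * (1 - x * q ^ k) = (1 - x) * qPoch (x * q) q k := by
  rw [← qPoch_succ, qPoch_succ']

lemma qPoch_succ_mul_one_sub (x q : F) (k : ℕ) :
    qPoch x q (k + 1) * (1 - x * q ^ (k + 1)) = (1 - x) * (1 - x * q) * qPoch (x * q ^ 2) q k := by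
  have h := qPoch_mul_one_sub (x * q) q k
  rw [show x * q * q = x * q ^ 2 by ring] at h
  rw [qPoch_succ']
  linear_combination (1 - x) * h

lemma qPoch_ne_zero {x q : F} (h : ∀ l : ℕ, x * q ^ l ≠ 1) (k : ℕ) : qPoch x q k ≠ 0 :=
  prod_ne_zero_iff.2 fun l _ => sub_ne_zero.2 (h l).symm

end qPoch

section UnweightedSum

lemma eval_zero_plusNumer (q : F) (g : F → F) (s : Multiset F) :
    (plusNumer q g 1 s).eval 0 = signSum q g s := by
  simp [eval_plusNumer, signSum]

lemma coeff_prod_plusNumer_factor (q : F) {m : Multiset F} (hm : 0 ∉ m) :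
    (m.map fun b => (1 - C (q * b) * X) * (1 - C b⁻¹ * X)).prod.coeff (2 * m.card) =
      q ^ m.card := by
  induction m using Multiset.induction with
  | empty => simp
  | cons b m ih =>
    have hb : b ≠ 0 := fun h => hm (by simp [h])
    have h_coeff : ((1 - C (q * b) * X) * (1 - C b⁻¹ * X) : F[X]).coeff 2 = q := by
      rw [show (1 - C (q * b) * X) * (1 - C b⁻¹ * X) =
        1 - (C (q * b) + C b⁻¹) * X + C (q * b) * C b⁻¹ * X ^ 2 by ring, ← C_mul, ← C_add]
      simp [coeff_one, hb]
    rw [Multiset.map_cons, Multiset.prod_cons, Multiset.card_cons, mul_add, mul_one, add_comm,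
      coeff_mul_add_eq_of_natDegree_le (natDegree_plusNumer_factor_le q b)
        (natDegree_prod_plusNumer_factor_le q m),
      h_coeff, ih fun h => hm (Multiset.mem_cons_of_mem h), pow_succ']

lemma coeff_plusNumer (q : F) (g : F → F) {s : Multiset F} (hs : InvSeparated s) :
    (plusNumer q g 1 s).coeff (2 * s.card + 2) = -q ^ (s.card + 1) * signSum q g s := by
  rw [← lcoeff_apply, plusNumer, map_multiset_sum, Multiset.map_map, signSum,
    ← Multiset.sum_map_mul_left]
  refine congrArg _ (Multiset.map_congr rfl fun m hm => ?_)
  have h_quad : (1 - C q * X ^ 2 : F[X]).natDegree ≤ 2 := by compute_degree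
  have h_coeff : (1 - C q * X ^ 2 : F[X]).coeff 2 = -q := by simp [coeff_one]
  rw [Function.comp_apply, lcoeff_apply, coeff_C_mul, mul_one, ← card_of_mem_signChoices hm,
    add_comm, coeff_mul_add_eq_of_natDegree_le h_quad (natDegree_prod_plusNumer_factor_le q m),
    h_coeff, coeff_prod_plusNumer_factor q (hs.of_mem_signChoices hm).1]
  ring

lemma signSum_one_cons (q : F) {a : F} {s : Multiset F} (h : InvSeparated (a ::ₘ s)) :
    signSum q 1 (a ::ₘ s) = (1 + q ^ (s.card + 1)) * signSum q 1 s := by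
  have hs := (invSeparated_cons.1 h).2.2.2
  have numer_eq : signSumNumer q 1 1 0 s = signDenom s * C (signSum q 1 (a ::ₘ s)) :=
    signSumNumer_eq_signDenom_mul (E := {a}) (by simp) (by simp) h (by simp) (by simp) (by simp)
      (by simp)
  have eval_numer : (signSumNumer q 1 1 0 s).eval 0 = (1 + q ^ (s.card + 1)) * signSum q 1 s := by
    rw [signSumNumer, eval_sub, eval_zero_plusNumer, ← coeff_zero_eq_eval_zero, coeff_reflect,
      revAt_zero, mul_zero, zero_add, coeff_plusNumer q 1 hs]
    ring
  rw [← eval_numer, numer_eq]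
  simp [eval_signDenom]

lemma signSum_one (q : F) {s : Multiset F} (hs : InvSeparated s) :
    signSum q 1 s = qPoch (-q) q s.card := by
  induction s using Multiset.induction with
  | empty => simp [signSum, signChoices, signWeight, qPoch]
  | cons a s ih =>
    rw [signSum_one_cons q hs, ih (invSeparated_cons.1 hs).2.2.2, Multiset.card_cons, qPoch_succ]
    ring

end UnweightedSum

section PairFactor

/-- The factor `(1 - u / a) (1 - v a)`, the weight `g` of the sums to be evaluated. -/
def pairFactor (u v a : F) : F :=
  (1 - u * a⁻¹) * (1 - v * a)

/-- The polynomial `X * pairFactor u v X`. -/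
noncomputable def pairPoly (u v : F) : F[X] :=
  (X - C u) * (1 - C v * X)

lemma eval_pairPoly (u v : F) : ∀ t ≠ 0, (pairPoly u v).eval t = t ^ 1 * pairFactor u v t := by
  intro t ht
  simp only [pairPoly, pairFactor, eval_mul, eval_sub, eval_X, eval_C, eval_one]
  field_simp

lemma natDegree_pairPoly_le (u v : F) : (pairPoly u v).natDegree ≤ 2 * 1 := by
  rw [pairPoly]
  compute_degree

lemma pairFactor_self_inv (w a : F) : pairFactor w w a⁻¹ = pairFactor w w a := by
  rw [pairFactor, pairFactor, inv_inv, mul_comm]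

lemma signSum_pairFactor_self (q w : F) {s : Multiset F} (hs : InvSeparated s) :
    signSum q (pairFactor w w) s = qPoch (-q) q s.card * (s.map (pairFactor w w)).prod := by
  rw [mul_comm, ← signSum_one q hs]
  exact signSum_eq_prod_mul q (pairFactor_self_inv w) fun _ _ b _ => (mul_one _).symm

lemma signSum_pairFactor_cons_right (q u : F) {v : F} {s : Multiset F}
    (hs : InvSeparated (v ::ₘ s)) :
    signSum q (pairFactor u v) (v ::ₘ s) =
      (1 - q * v ^ 2) * (1 - u / v) * signSum q (pairFactor u (q * v)) s := by
  have hv := (invSeparated_cons.1 hs).1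
  have weight_inv (m : Multiset F) : signWeight q (pairFactor u v) (v⁻¹ ::ₘ m) = 0 := by
    simp [signWeight_cons, pairFactor, hv]
  rw [signSum_cons, signSum, ← Multiset.sum_map_mul_left]
  simp only [weight_inv, Multiset.map_const', Multiset.sum_replicate, smul_zero, add_zero]
  refine congrArg _ (Multiset.map_congr rfl fun m hm => ?_)
  have hvm : InvSeparated (v ::ₘ m) :=
    hs.of_mem_signChoices (mem_signChoices.2 (.cons (.inl rfl) (mem_signChoices.1 hm)))
  obtain ⟨-, hv2, hvb, -⟩ := invSeparated_cons.1 hvm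
  have hv2' : 1 - v ^ 2 ≠ 0 := sub_ne_zero.2 hv2.symm
  have absorb : ∀ b ∈ m, pairFactor u (q * v) b = qFactor q (v * b) * pairFactor u v b := by
    intro b hb
    have : 1 - b * v ≠ 0 := sub_ne_zero.2 (mul_comm v b ▸ (hvb b hb).2.symm)
    rw [pairFactor, pairFactor, qFactor, mul_comm v b]
    field_simp
  have head_factor : pairFactor u v v * qFactor q (v * v) = (1 - q * v ^ 2) * (1 - u / v) := by
    rw [pairFactor, qFactor, ← sq]
    field_simp
  rw [signWeight_cons, signWeight_eq_prod_mul q absorb, head_factor]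
  ring

lemma signSum_pairFactor_cons_left {q : F} (hq : q ≠ 0) {u : F} (v : F) {s : Multiset F}
    (hs : InvSeparated (u ::ₘ s)) :
    signSum q (pairFactor u v) (u ::ₘ s) =
      q ^ s.card * (q - u ^ 2) * (1 - v / u) * signSum q (pairFactor (u / q) v) s := by
  have hu := (invSeparated_cons.1 hs).1
  have weight_eq_zero (m : Multiset F) : signWeight q (pairFactor u v) (u ::ₘ m) = 0 := by
    simp [signWeight_cons, pairFactor, hu]
  rw [signSum_cons, signSum, ← Multiset.sum_map_mul_left]
  simp only [weight_eq_zero, Multiset.map_const', Multiset.sum_replicate, smul_zero, zero_add]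
  refine congrArg _ (Multiset.map_congr rfl fun m hm => ?_)
  have hum : InvSeparated (u ::ₘ m) :=
    hs.of_mem_signChoices (mem_signChoices.2 (.cons (.inl rfl) (mem_signChoices.1 hm)))
  obtain ⟨-, hu2, hub, hm0⟩ := invSeparated_cons.1 hum
  have hu2' : u ^ 2 - 1 ≠ 0 := sub_ne_zero.2 hu2
  have absorb : ∀ b ∈ m, q * pairFactor (u / q) v b =
      qFactor q (u⁻¹ * b) * pairFactor u v b := by
    intro b hb
    have hb0 : b ≠ 0 := fun h => hm0.1 (h ▸ hb)
    have : u - b ≠ 0 := sub_ne_zero.2 (hub b hb).1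
    rw [pairFactor, pairFactor, qFactor]
    field_simp
    ring
  have head_factor : pairFactor u v u⁻¹ * qFactor q (u⁻¹ * u⁻¹) = (q - u ^ 2) * (1 - v / u) := by
    rw [pairFactor, qFactor]
    field_simp
    ring
  have prod_eq := signWeight_eq_prod_mul q absorb
  rw [signWeight_eq_prod_mul q fun _ _ => rfl, Multiset.map_const', Multiset.prod_replicate,
    card_of_mem_signChoices hm] at prod_eq
  rw [signWeight_cons, head_factor, mul_assoc (_ * _), ← prod_eq]
  ring

end PairFactor

section Coefficients

/-- The `i`-th term of a very-well-poised series with parameters `a` and `b` and argument `w`; the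
very-well-poised part `(q√a, -q√a)_i / (√a, -√a)_i` is written as `(1 - a q^{2i}) / (1 - a)`. -/
def vwpTerm (q a b w : F) (i : ℕ) : F :=
  qPoch a q i * ((1 - a * q ^ (2 * i)) / (1 - a)) * qPoch b q i /
    (qPoch (a * q / b) q i * qPoch q q i) * w ^ i

lemma vwpTerm_zero (q : F) {a : F} (b w : F) (ha : a ≠ 1) : vwpTerm q a b w 0 = 1 := by
  simp [vwpTerm, qPoch, sub_ne_zero.2 ha.symm]

lemma vwpTerm_succ {q a b : F} (hq : q ≠ 0) (w : F) (i : ℕ) (ha : a ≠ 1) (ha2 : a * q ^ 2 ≠ 1)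
    (hab : a * q / b ≠ 1) (hqi : q ^ (i + 1) ≠ 1) :
    vwpTerm q a b w (i + 1) * (1 - a * q ^ (i + 1)) * (1 - q ^ (i + 1)) * (1 - a * q / b) =
      w * (1 - b) * (1 - a * q) * (1 - a * q ^ 2) * vwpTerm q (a * q ^ 2) (b * q) w i := by
  have ha : 1 - a ≠ 0 := sub_ne_zero.2 ha.symm
  have ha2 : 1 - a * q ^ 2 ≠ 0 := sub_ne_zero.2 ha2.symm
  have hab : 1 - a * q / b ≠ 0 := sub_ne_zero.2 hab.symm
  have hqi : 1 - q ^ (i + 1) ≠ 0 := sub_ne_zero.2 hqi.symm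
  have h_param : a * q ^ 2 * q / (b * q) = a * q / b * q := by field_simp
  have h_q : qPoch q q (i + 1) = qPoch q q i * (1 - q ^ (i + 1)) := by rw [qPoch_succ, pow_succ']
  have h_a := qPoch_succ_mul_one_sub a q i
  rw [vwpTerm, vwpTerm, h_param, qPoch_succ' b, qPoch_succ' (a * q / b), h_q]
  generalize a * q / b = d at *
  field_simp
  congr 1
  linear_combination (1 - a * q ^ (2 * (i + 1))) * (1 - b) * qPoch (b * q) q i * w ^ (i + 1) * h_a

lemma vwpTerm_mul_right {q a b : F} (hq : q ≠ 0) (w : F) (i : ℕ)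
    (hab : ∀ l : ℕ, a / b * q ^ l ≠ 1) :
    vwpTerm q a b w i * (1 - b * q ^ i) * (1 - a / b * q ^ i) =
      (1 - b) * (1 - a / b) * vwpTerm q a (b * q) w i := by
  have h_param : a * q / (b * q) = a / b := mul_div_mul_right _ _ hq
  have h_b := qPoch_mul_one_sub b q i
  have h_ab : (1 - a / b * q ^ i) * (qPoch (a * q / b) q i)⁻¹ =
      (1 - a / b) * (qPoch (a / b) q i)⁻¹ := by
    have ne_zero := qPoch_ne_zero hab i
    have ne_zero_succ : qPoch (a / b * q) q i ≠ 0 :=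
      qPoch_ne_zero (fun l => by rw [mul_assoc, ← pow_succ']; exact hab _) i
    have h := qPoch_mul_one_sub (a / b) q i
    rw [mul_div_right_comm, ← div_eq_mul_inv, ← div_eq_mul_inv,
      div_eq_div_iff ne_zero_succ ne_zero]
    linear_combination h
  simp only [vwpTerm, h_param, div_eq_mul_inv (_ * _) (_ * _), mul_inv]
  linear_combination qPoch a q i * ((1 - a * q ^ (2 * i)) / (1 - a)) * (qPoch q q i)⁻¹ * w ^ i *
    (qPoch b q i * (1 - b * q ^ i) * h_ab + (1 - a / b) * (qPoch (a / b) q i)⁻¹ * h_b)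

/-- The factor in front of the very-well-poised series in the evaluation of
`signSum q (pairFactor (q ^ r * z) z)` in `n` variables. -/
def signSumPrefactor (q : F) (n r : ℕ) (z : F) : F :=
  q ^ ((n * r : ℤ) - (r.choose 2 : ℤ)) * qPoch (-q) q (n - r) *
    (qPoch (q * z ^ 2) (q ^ 2) r / qPoch (q * z ^ 2) q r)

/-- The coefficient of the `i`-th product in the evaluation of
`signSum q (pairFactor (q ^ r * z) z)` in `n` variables. -/
def signSumCoeff (q : F) (n r : ℕ) (z : F) (i : ℕ) : F :=
  signSumPrefactor q n r z *
    vwpTerm q (z ^ 2) (q ^ (-(r : ℤ))) (-(q ^ ((r : ℤ) - (n : ℤ)))) i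

lemma zpow_neg_succ_mul_self {q : F} (hq : q ≠ 0) (r : ℕ) :
    q ^ (-((r + 1 : ℕ) : ℤ)) * q = q ^ (-(r : ℤ)) := by
  rw [← zpow_add_one₀ hq]
  push_cast
  ring_nf

lemma zpow_mul_sub_choose_succ {q : F} (hq : q ≠ 0) (n r : ℕ) :
    q ^ (((n + 1 : ℕ) * (r + 1 : ℕ) : ℤ) - ((r + 1).choose 2 : ℤ)) =
      q ^ (n + 1) * q ^ ((n * r : ℤ) - (r.choose 2 : ℤ)) := by
  rw [← zpow_natCast, ← zpow_add₀ hq, Nat.choose_succ_succ' r 1, Nat.choose_one_right]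
  push_cast
  ring_nf

lemma signSumPrefactor_succ_succ {q z : F} (hq : q ≠ 0) (hz : ∀ m : ℕ, z ^ 2 * q ^ m ≠ 1)
    (n r : ℕ) :
    signSumPrefactor q (n + 1) (r + 1) z * (1 - z ^ 2 * q ^ (r + 1)) =
      q ^ (n + 1) * (1 - z ^ 2 * q ^ (2 * r + 1)) * signSumPrefactor q n r z := by
  have ne_zero : 1 - q * z ^ 2 * q ^ r ≠ 0 := fun h => hz (r + 1) (by linear_combination -h)
  rw [signSumPrefactor, signSumPrefactor, zpow_mul_sub_choose_succ hq, qPoch_succ, qPoch_succ,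
    Nat.add_sub_add_right]
  field_simp
  ring

lemma signSumPrefactor_succ_succ' {q z : F} (hq : q ≠ 0) (hz : ∀ m : ℕ, z ^ 2 * q ^ m ≠ 1)
    (n r : ℕ) :
    signSumPrefactor q (n + 1) (r + 1) z * (1 - z ^ 2 * q ^ 2) =
      q ^ (n + 1) * (1 - z ^ 2 * q ^ (r + 2)) * signSumPrefactor q n r (z * q) := by
  have poch_ne_zero : qPoch (q * z ^ 2) q (r + 1) ≠ 0 :=
    qPoch_ne_zero (fun l h => hz (l + 1) (by linear_combination h)) _
  have poch_ne_zero' : qPoch (q * (z * q) ^ 2) q r ≠ 0 :=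
    qPoch_ne_zero (fun l h => hz (l + 3) (by linear_combination h)) _
  have h_poch := qPoch_succ_mul_one_sub (q * z ^ 2) q r
  rw [show q * z ^ 2 * q ^ 2 = q * (z * q) ^ 2 by ring] at h_poch
  rw [signSumPrefactor, signSumPrefactor, zpow_mul_sub_choose_succ hq,
    qPoch_succ' (q * z ^ 2) (q ^ 2), show q * z ^ 2 * q ^ 2 = q * (z * q) ^ 2 by ring,
    Nat.add_sub_add_right]
  generalize qPoch (q * z ^ 2) q (r + 1) = A at *
  generalize qPoch (q * (z * q) ^ 2) q r = B at *
  generalize qPoch (q * (z * q) ^ 2) (q ^ 2) r = P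
  field_simp
  linear_combination -qPoch (-q) q (n - r) * P * h_poch

lemma signSumCoeff_zero (q : F) (n : ℕ) {z : F} (hz : z ^ 2 ≠ 1) :
    signSumCoeff q n 0 z 0 = qPoch (-q) q n := by
  simp [signSumCoeff, signSumPrefactor, vwpTerm_zero _ _ _ hz, qPoch]

-- This matches the values at `X = z`, where the remaining sum has `z` replaced by `z * q`.
lemma signSumCoeff_succ_succ {q z : F} (hq0 : q ≠ 0) (hq : ∀ m : ℕ, q ^ (m + 1) ≠ 1)
    (hz : ∀ m : ℕ, z ^ 2 * q ^ m ≠ 1) (n r i : ℕ) :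
    signSumCoeff q (n + 1) (r + 1) z (i + 1) * (1 - z ^ 2 * q ^ (i + 1)) * (1 - q ^ (i + 1)) =
      (1 - z ^ 2 * q) * (1 - q ^ (r + 1)) * signSumCoeff q n r (z * q) i := by
  have h_ab : z ^ 2 * q / q ^ (-((r + 1 : ℕ) : ℤ)) = z ^ 2 * q ^ (r + 2) := by
    rw [zpow_neg, div_inv_eq_mul, zpow_natCast]
    ring
  have h_b : q ^ (-((r + 1 : ℕ) : ℤ)) * q ^ (r + 1) = 1 := by
    rw [zpow_neg, zpow_natCast, inv_mul_cancel₀ (pow_ne_zero _ hq0)]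
  have h_w : q ^ (n + 1) * q ^ ((r : ℤ) - n) = q ^ (r + 1) := by
    rw [← zpow_natCast, ← zpow_add₀ hq0, ← zpow_natCast]
    push_cast
    ring_nf
  have h_vwp := vwpTerm_succ (b := q ^ (-((r + 1 : ℕ) : ℤ))) hq0 (-q ^ ((r : ℤ) - n)) i
    (by simpa using hz 0) (hz 2) (h_ab ▸ hz (r + 2)) (hq i)
  rw [zpow_neg_succ_mul_self hq0, h_ab, ← mul_pow] at h_vwp
  have h_prefactor := signSumPrefactor_succ_succ' hq0 hz n r
  rw [signSumCoeff, signSumCoeff, Nat.cast_succ n, Nat.cast_succ r, add_sub_add_right_eq_sub,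
    ← Nat.cast_succ r]
  refine mul_right_cancel₀ (sub_ne_zero.2 (hz (r + 2)).symm) ?_
  generalize q ^ (-((r + 1 : ℕ) : ℤ)) = b at *
  generalize q ^ ((r : ℤ) - n) = w at *
  linear_combination signSumPrefactor q (n + 1) (r + 1) z * h_vwp +
    (1 - z ^ 2 * q) * vwpTerm q ((z * q) ^ 2) (q ^ (-(r : ℤ))) (-w) i *
      (-w * (1 - b) * h_prefactor +
        (1 - z ^ 2 * q ^ (r + 2)) * signSumPrefactor q n r (z * q) * ((b - 1) * h_w + h_b))

-- This matches the values at `X = z * q ^ (r + 1)`.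
lemma signSumCoeff_succ {q z : F} (hq0 : q ≠ 0) (hz : ∀ m : ℕ, z ^ 2 * q ^ m ≠ 1) (n r i : ℕ) :
    signSumCoeff q (n + 1) (r + 1) z i * (1 - z ^ 2 * q ^ (i + r + 1)) * (q ^ (r + 1) - q ^ i) =
      q ^ (n + 1) * (1 - z ^ 2 * q ^ (2 * r + 1)) * (q ^ (r + 1) - 1) *
        signSumCoeff q n r z i := by
  have h_ab : z ^ 2 / q ^ (-((r + 1 : ℕ) : ℤ)) = z ^ 2 * q ^ (r + 1) := by
    rw [zpow_neg, div_inv_eq_mul, zpow_natCast]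
  have h_b : q ^ (-((r + 1 : ℕ) : ℤ)) * q ^ (r + 1) = 1 := by
    rw [zpow_neg, zpow_natCast, inv_mul_cancel₀ (pow_ne_zero _ hq0)]
  have h_vwp := vwpTerm_mul_right (a := z ^ 2) (b := q ^ (-((r + 1 : ℕ) : ℤ))) hq0
    (-q ^ ((r : ℤ) - n)) i fun l => by
      rw [h_ab, mul_assoc, ← pow_add]
      exact hz _
  rw [zpow_neg_succ_mul_self hq0, h_ab] at h_vwp
  have h_prefactor := signSumPrefactor_succ_succ hq0 hz n r
  rw [signSumCoeff, signSumCoeff, Nat.cast_succ n, Nat.cast_succ r, add_sub_add_right_eq_sub,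
    ← Nat.cast_succ r]
  generalize q ^ (-((r + 1 : ℕ) : ℤ)) = b at *
  generalize -q ^ ((r : ℤ) - n) = w at *
  linear_combination signSumPrefactor q (n + 1) (r + 1) z * q ^ (r + 1) * h_vwp +
    (q ^ (r + 1) - 1) * vwpTerm q (z ^ 2) (q ^ (-(r : ℤ))) w i * h_prefactor +
    signSumPrefactor q (n + 1) (r + 1) z * (q ^ i * vwpTerm q (z ^ 2) b w i *
      (1 - z ^ 2 * q ^ (i + r + 1)) - (1 - z ^ 2 * q ^ (r + 1)) *
        vwpTerm q (z ^ 2) (q ^ (-(r : ℤ))) w i) * h_b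

end Coefficients

section Evaluation

/-- The evaluation of `signSum q (pairFactor (q ^ r * z) z) s`: the very-well-poised series with its
dependence on the variables cleared of denominators. -/
def signSumSeries (q : F) (r : ℕ) (z : F) (s : Multiset F) : F :=
  ∑ i ∈ range (r + 1), signSumCoeff q s.card r z i *
    (s.map (pairFactor (z * q ^ i) (z * q ^ i))).prod

-- As a function of `t`, each side is a polynomial of degree `1` in `t + t⁻¹`.
lemma signSum_pairFactor_cons_eq_sum {ι : Type*} {q u v a b t : F} {s : Multiset F} {I : Finset ι}
    {c w : ι → F} (hs : InvSeparated (a ::ₘ b ::ₘ s))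
    (ha : signSum q (pairFactor u v) (a ::ₘ s) = ∑ i ∈ I, c i * pairFactor (w i) (w i) a)
    (hb : signSum q (pairFactor u v) (b ::ₘ s) = ∑ i ∈ I, c i * pairFactor (w i) (w i) b)
    (ht : InvSeparated (t ::ₘ s)) :
    signSum q (pairFactor u v) (t ::ₘ s) = ∑ i ∈ I, c i * pairFactor (w i) (w i) t := by
  have eval_eq (T : F) (hT : T ≠ 0) : (∑ i ∈ I, C (c i) * pairPoly (w i) (w i)).eval T =
      T ^ 1 * ∑ i ∈ I, c i * pairFactor (w i) (w i) T := by
    simp only [eval_finsetSum, eval_mul, eval_C, eval_pairPoly _ _ T hT, mul_sum]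
    exact sum_congr rfl fun i _ => by ring
  have natDegree_le : (∑ i ∈ I, C (c i) * pairPoly (w i) (w i)).natDegree ≤ 2 * 1 :=
    natDegree_sum_le_of_forall_le _ _ fun i _ =>
      (natDegree_C_mul_le _ _).trans (natDegree_pairPoly_le _ _)
  have ht0 := (invSeparated_cons.1 ht).1
  refine mul_left_cancel₀ (pow_ne_zero 1 ht0) ?_
  rw [← eval_eq t ht0]
  refine pow_mul_signSum_cons_eq_eval (E := {a, b}) (eval_pairPoly u v)
    (natDegree_pairPoly_le u v) (by simpa using hs) rfl natDegree_le ?_ ?_ ht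
  · intro T hT
    rw [eval_eq T hT, eval_eq T⁻¹ (inv_ne_zero hT)]
    simp only [pairFactor_self_inv]
    field_simp
  · intro T hT
    simp only [Multiset.insert_eq_cons, Multiset.mem_cons, Multiset.mem_singleton] at hT
    have hT0 : T ≠ 0 := fun h => hs.1 (by rcases hT with rfl | rfl <;> simp [h])
    rw [eval_eq T hT0]
    rcases hT with rfl | rfl
    · rw [ha]
    · rw [hb]

variable {q z : F}

lemma signSumSeries_succ_cons (r : ℕ) (t : F) (s : Multiset F) :
    signSumSeries q (r + 1) z (t ::ₘ s) =
      ∑ i ∈ range (r + 2), signSumCoeff q (s.card + 1) (r + 1) z i *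
        (s.map (pairFactor (z * q ^ i) (z * q ^ i))).prod *
        pairFactor (z * q ^ i) (z * q ^ i) t := by
  simp only [signSumSeries, Multiset.map_cons, Multiset.prod_cons, Multiset.card_cons]
  exact sum_congr rfl fun i _ => by ring

lemma signSumSeries_succ_cons_self (hq0 : q ≠ 0) (hq : ∀ m : ℕ, q ^ (m + 1) ≠ 1) (hz0 : z ≠ 0)
    (hz : ∀ m : ℕ, z ^ 2 * q ^ m ≠ 1) (r : ℕ) (s : Multiset F) :
    signSumSeries q (r + 1) z (z ::ₘ s) =
      (1 - q * z ^ 2) * (1 - q ^ (r + 1)) * signSumSeries q r (z * q) s := by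
  have factor_eq (i : ℕ) :
      pairFactor (z * q ^ i) (z * q ^ i) z = (1 - z ^ 2 * q ^ i) * (1 - q ^ i) := by
    rw [pairFactor]
    field_simp
  rw [signSumSeries_succ_cons, sum_range_succ', factor_eq, pow_zero, sub_self, mul_zero, mul_zero,
    add_zero, signSumSeries, mul_sum]
  refine sum_congr rfl fun i _ => ?_
  rw [factor_eq, show z * q * q ^ i = z * q ^ (i + 1) by ring]
  linear_combination (s.map (pairFactor (z * q ^ (i + 1)) (z * q ^ (i + 1)))).prod *
    signSumCoeff_succ_succ hq0 hq hz s.card r i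

lemma signSumSeries_succ_cons_pow_mul (hq0 : q ≠ 0) (hz0 : z ≠ 0)
    (hz : ∀ m : ℕ, z ^ 2 * q ^ m ≠ 1) (r : ℕ) (s : Multiset F) :
    signSumSeries q (r + 1) z ((q ^ (r + 1) * z) ::ₘ s) =
      q ^ s.card * (q - (q ^ (r + 1) * z) ^ 2) * (1 - z / (q ^ (r + 1) * z)) *
        signSumSeries q r z s := by
  have factor_eq (i : ℕ) : q ^ (r + 1) * pairFactor (z * q ^ i) (z * q ^ i) (q ^ (r + 1) * z) =
      (1 - z ^ 2 * q ^ (i + r + 1)) * (q ^ (r + 1) - q ^ i) := by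
    rw [pairFactor]
    field_simp
    ring
  have factor_top :
      pairFactor (z * q ^ (r + 1)) (z * q ^ (r + 1)) (q ^ (r + 1) * z) = 0 := by
    rw [pairFactor, mul_comm z, mul_inv_cancel₀ (mul_ne_zero (pow_ne_zero _ hq0) hz0), sub_self,
      zero_mul]
  rw [signSumSeries_succ_cons, sum_range_succ, factor_top, mul_zero, add_zero, signSumSeries,
    mul_sum]
  refine sum_congr rfl fun i _ => mul_left_cancel₀ (pow_ne_zero (r + 1) hq0) ?_
  have h_quot : q ^ (r + 1) * (1 - z / (q ^ (r + 1) * z)) = q ^ (r + 1) - 1 := by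
    field_simp
  linear_combination (s.map (pairFactor (z * q ^ i) (z * q ^ i))).prod *
    (signSumCoeff q (s.card + 1) (r + 1) z i * factor_eq i +
      signSumCoeff_succ hq0 hz s.card r i -
      q ^ s.card * (q - (q ^ (r + 1) * z) ^ 2) * signSumCoeff q s.card r z i * h_quot)

theorem signSum_pairFactor (hq0 : q ≠ 0) (hq : ∀ m : ℕ, q ^ (m + 1) ≠ 1)
    (hz : ∀ m : ℕ, z ^ 2 * q ^ m ≠ 1) {r : ℕ} {s : Multiset F} (hr : r ≤ s.card)
    (hs : ∀ m : ℕ, InvSeparated ((z * q ^ m) ::ₘ s)) :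
    signSum q (pairFactor (q ^ r * z) z) s = signSumSeries q r z s := by
  induction r generalizing s z with
  | zero =>
    have hz2 : z ^ 2 ≠ 1 := by simpa using hz 0
    simp [signSumSeries, signSumCoeff_zero q s.card hz2,
      signSum_pairFactor_self q z (invSeparated_cons.1 (hs 0)).2.2.2]
  | succ r ih =>
    obtain ⟨x, hx⟩ := Multiset.card_pos_iff_exists_mem.1 (r.succ_pos.trans_le hr)
    obtain ⟨s, rfl⟩ := Multiset.exists_cons_of_mem hx
    have hr' : r ≤ s.card := by simpa using hr
    have hs' (m : ℕ) : InvSeparated ((z * q ^ m) ::ₘ s) :=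
      (hs m).mono (Multiset.cons_le_cons _ (Multiset.le_cons_self _ _))
    have hz_sep : InvSeparated (z ::ₘ s) := by simpa using hs' 0
    have hu_sep : InvSeparated ((q ^ (r + 1) * z) ::ₘ s) := mul_comm z (q ^ (r + 1)) ▸ hs' (r + 1)
    have hz0 : z ≠ 0 := (invSeparated_cons.1 hz_sep).1
    have ne_u : z ≠ q ^ (r + 1) * z := fun h => hq r (mul_right_cancel₀ hz0 (by rw [one_mul, ← h]))
    have mul_u_ne_one : z * (q ^ (r + 1) * z) ≠ 1 := fun h => hz (r + 1) (by linear_combination h)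
    have value_z : signSum q (pairFactor (q ^ (r + 1) * z) z) (z ::ₘ s) =
        signSumSeries q (r + 1) z (z ::ₘ s) := by
      have h_shift : q ^ r * (z * q) = q ^ (r + 1) * z := by ring
      have ih_z := ih (z := z * q) (fun m h => hz (m + 2) (by linear_combination h)) hr'
        fun m => by rw [mul_assoc, ← pow_succ']; exact hs' (m + 1)
      rw [signSum_pairFactor_cons_right q _ hz_sep, signSumSeries_succ_cons_self hq0 hq hz0 hz,
        ← ih_z, mul_div_cancel_right₀ _ hz0, h_shift, mul_comm q z]
    have value_u : signSum q (pairFactor (q ^ (r + 1) * z) z) ((q ^ (r + 1) * z) ::ₘ s) =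
        signSumSeries q (r + 1) z ((q ^ (r + 1) * z) ::ₘ s) := by
      have h_shift : q ^ (r + 1) * z / q = q ^ r * z := by
        rw [div_eq_iff hq0]
        ring
      rw [signSum_pairFactor_cons_left hq0 z hu_sep, signSumSeries_succ_cons_pow_mul hq0 hz0 hz,
        h_shift, ih hz hr' hs']
    rw [signSumSeries_succ_cons] at value_z value_u ⊢
    exact signSum_pairFactor_cons_eq_sum (hz_sep.cons_cons hu_sep ne_u mul_u_ne_one) value_z value_u
      (invSeparated_cons.1 (hs 0)).2.2.2

end Evaluation

section HypergeometricForm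

variable {q z : F}

lemma pairFactor_ne_zero {u a : F} {s : Multiset F} (hs : InvSeparated (u ::ₘ s)) (ha : a ∈ s) :
    pairFactor u u a ≠ 0 := by
  obtain ⟨-, -, hus, hs0⟩ := invSeparated_cons.1 hs
  have ha0 : a ≠ 0 := fun h => hs0.1 (h ▸ ha)
  refine mul_ne_zero (sub_ne_zero.2 fun h => (hus a ha).1 ?_) (sub_ne_zero.2 (hus a ha).2.symm)
  rwa [eq_comm, mul_inv_eq_one₀ ha0] at h

lemma prod_pairFactor_ne_zero {u : F} {s : Multiset F} (hs : InvSeparated (u ::ₘ s)) :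
    (s.map (pairFactor u u)).prod ≠ 0 :=
  Multiset.prod_ne_zero fun h => by
    obtain ⟨a, ha, ha0⟩ := Multiset.mem_map.1 h
    exact pairFactor_ne_zero hs ha ha0

lemma signSum_pairFactor_eq_prod_mul (q u : F) {v : F} {s : Multiset F}
    (hs : InvSeparated (v ::ₘ s)) :
    signSum q (pairFactor u v) s =
      (s.map (pairFactor v v)).prod *
        signSum q (fun a => (1 - u * a⁻¹) / (1 - v * a⁻¹)) s := by
  refine signSum_eq_prod_mul q (pairFactor_self_inv v) fun m hm b hb => ?_
  have hvm : InvSeparated (v ::ₘ m) :=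
    hs.of_mem_signChoices (mem_signChoices.2 (.cons (.inl rfl) (mem_signChoices.1 hm)))
  have ne_zero : 1 - v * b⁻¹ ≠ 0 := left_ne_zero_of_mul (pairFactor_ne_zero hvm hb)
  rw [pairFactor, pairFactor, mul_right_comm, mul_div_cancel₀ _ ne_zero]

lemma pairFactor_mul_pow {a : F} (ha : a ≠ 0)
    (hza : ∀ m : ℕ, z * a * q ^ m ≠ 1 ∧ z * q ^ m ≠ a) (i : ℕ) :
    pairFactor (z * q ^ i) (z * q ^ i) a =
      pairFactor z z a * (qPoch (q * z * a) q i * qPoch (q * z / a) q i /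
        (qPoch (z * a) q i * qPoch (z / a) q i)) := by
  have ne_zero : qPoch (z * a) q i ≠ 0 := qPoch_ne_zero (fun m => (hza m).1) i
  have ne_zero' : qPoch (z / a) q i ≠ 0 := qPoch_ne_zero (fun m h => (hza m).2 (by
    rwa [div_mul_eq_mul_div, div_eq_one_iff_eq ha] at h)) i
  have h := qPoch_mul_one_sub (z * a) q i
  have h' := qPoch_mul_one_sub (z / a) q i
  rw [show z * a * q = q * z * a by ring] at h
  rw [show z / a * q = q * z / a by ring] at h'
  rw [← mul_div_assoc, eq_div_iff (mul_ne_zero ne_zero ne_zero'), pairFactor, pairFactor]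
  linear_combination qPoch (z / a) q i * (1 - z / a * q ^ i) * h +
    (1 - z * a) * qPoch (q * z * a) q i * h'

lemma vwpTerm_sq (b w : F) (hz : ∀ m : ℕ, z * q ^ m ≠ 1 ∧ z * q ^ m ≠ -1) (i : ℕ) :
    vwpTerm q (z ^ 2) b w i =
      qPoch (z ^ 2) q i * qPoch (q * z) q i * qPoch (-(q * z)) q i * qPoch b q i /
        (qPoch z q i * qPoch (-z) q i * qPoch (z ^ 2 * q / b) q i) * w ^ i / qPoch q q i := by
  have ne_zero : qPoch z q i ≠ 0 := qPoch_ne_zero (fun m => (hz m).1) i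
  have ne_zero' : qPoch (-z) q i ≠ 0 :=
    qPoch_ne_zero (fun m h => (hz m).2 (by linear_combination -h)) i
  have hz1 : 1 - z ^ 2 ≠ 0 := fun h => by
    rcases mul_eq_zero.1 (show (1 - z) * (1 + z) = 0 by linear_combination h) with h | h
    · exact (hz 0).1 (by linear_combination -h)
    · exact (hz 0).2 (by linear_combination h)
  have h := qPoch_mul_one_sub z q i
  have h' := qPoch_mul_one_sub (-z) q i
  rw [mul_comm z q] at h
  rw [show -z * q = -(q * z) by ring] at h'
  have h_quot : (1 - z ^ 2 * q ^ (2 * i)) / (1 - z ^ 2) =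
      qPoch (q * z) q i * qPoch (-(q * z)) q i / (qPoch z q i * qPoch (-z) q i) := by
    rw [div_eq_div_iff hz1 (mul_ne_zero ne_zero ne_zero')]
    linear_combination qPoch (-z) q i * (1 + z * q ^ i) * h +
      (1 - z) * qPoch (q * z) q i * h'
  rw [vwpTerm, h_quot]
  simp only [div_eq_mul_inv, mul_inv]
  ring

lemma signSumSeries_ofFn {n : ℕ} {x : Fin n → F} (r : ℕ) (hx0 : ∀ l, x l ≠ 0)
    (hz : ∀ m : ℕ, z * q ^ m ≠ 1 ∧ z * q ^ m ≠ -1)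
    (hzx : ∀ l, ∀ m : ℕ, z * x l * q ^ m ≠ 1 ∧ z * q ^ m ≠ x l) :
    signSumSeries q r z (List.ofFn x : Multiset F) =
      ((List.ofFn x : Multiset F).map (pairFactor z z)).prod * (signSumPrefactor q n r z *
        ∑ i ∈ range (r + 1),
          (qPoch (z ^ 2) q i * qPoch (q * z) q i * qPoch (-(q * z)) q i *
              qPoch (q ^ (-(r : ℤ))) q i *
              ∏ l, (qPoch (q * z * x l) q i * qPoch (q * z / x l) q i)) /
            (qPoch z q i * qPoch (-z) q i * qPoch (q ^ (r + 1) * z ^ 2) q i *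
              ∏ l, (qPoch (z * x l) q i * qPoch (z / x l) q i)) *
            (-(q ^ ((r : ℤ) - (n : ℤ)))) ^ i / qPoch q q i) := by
  have h_param : z ^ 2 * q / q ^ (-(r : ℤ)) = q ^ (r + 1) * z ^ 2 := by
    rw [zpow_neg, div_inv_eq_mul, zpow_natCast]
    ring
  rw [signSumSeries, mul_sum, mul_sum]
  refine sum_congr rfl fun i _ => ?_
  simp only [Multiset.coe_card, List.length_ofFn, Multiset.map_coe, Multiset.prod_coe,
    List.map_ofFn, List.prod_ofFn, Function.comp_apply, pairFactor_mul_pow (hx0 _) (hzx _),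
    prod_mul_distrib, prod_div_distrib, signSumCoeff, vwpTerm_sq _ _ hz, h_param]
  simp only [div_eq_mul_inv, mul_inv]
  ring

end HypergeometricForm

end

/-- Theorem 8: a very-well-poised terminating basic hypergeometric summation obtained
from the principal specialization `u_i = z q^{i-1}` (with `t = q`) of the main
rational identity; the right-hand side is a terminating `_{2n+4}φ_{2n+3}` series. -/
theorem stmt14 {F : Type*} [Field F] {n : ℕ} (r : ℕ) (hr : r ≤ n)
    (x : Fin n → F) (z q : F)
    (hq0 : q ≠ 0) (hz0 : z ≠ 0) (hx0 : ∀ i, x i ≠ 0)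
    (hx2 : ∀ i, (x i) ^ 2 ≠ 1)
    (hxx : ∀ i j, i ≠ j → x i * x j ≠ 1 ∧ x i ≠ x j)
    (hq : ∀ m : ℤ, m ≠ 0 → q ^ m ≠ 1)
    (hz2 : ∀ m : ℤ, z ^ 2 * q ^ m ≠ 1)
    (hz1 : ∀ m : ℤ, z * q ^ m ≠ 1 ∧ z * q ^ m ≠ -1)
    (hzx : ∀ i, ∀ m : ℤ, z * x i * q ^ m ≠ 1 ∧ z * q ^ m ≠ x i) :
    ∑ σ : Fin n → Bool,
      (∏ i, ((1 - q * (sgnVar x σ i) ^ 2) / (1 - (sgnVar x σ i) ^ 2)) *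
        ((1 - q ^ r * z * (sgnVar x σ i)⁻¹) / (1 - z * (sgnVar x σ i)⁻¹))) *
      ∏ i, ∏ j ∈ Finset.Ioi i,
        (1 - q * sgnVar x σ i * sgnVar x σ j) / (1 - sgnVar x σ i * sgnVar x σ j)
    = q ^ ((n * r : ℤ) - (r.choose 2 : ℤ)) * qPoch (-q) q (n - r) *
        (qPoch (q * z ^ 2) (q ^ 2) r / qPoch (q * z ^ 2) q r) *
        ∑ i ∈ Finset.range (r + 1),
          (qPoch (z ^ 2) q i * qPoch (q * z) q i * qPoch (-(q * z)) q i *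
              qPoch (q ^ (-(r : ℤ))) q i *
              ∏ l, (qPoch (q * z * x l) q i * qPoch (q * z / x l) q i)) /
            (qPoch z q i * qPoch (-z) q i * qPoch (q ^ (r + 1) * z ^ 2) q i *
              ∏ l, (qPoch (z * x l) q i * qPoch (z / x l) q i)) *
            (-(q ^ ((r : ℤ) - (n : ℤ)))) ^ i / qPoch q q i := by
  have hq' (m : ℕ) : q ^ (m + 1) ≠ 1 := by exact_mod_cast hq (m + 1) (by omega)
  have hz2' (m : ℕ) : z ^ 2 * q ^ m ≠ 1 := by exact_mod_cast hz2 m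
  have hz1' (m : ℕ) : z * q ^ m ≠ 1 ∧ z * q ^ m ≠ -1 := by exact_mod_cast hz1 m
  have hzx' (i) (m : ℕ) : z * x i * q ^ m ≠ 1 ∧ z * q ^ m ≠ x i := by exact_mod_cast hzx i m
  have hs (m : ℕ) : InvSeparated ((z * q ^ m) ::ₘ (List.ofFn x : Multiset F)) := by
    refine invSeparated_cons.2 ⟨mul_ne_zero hz0 (pow_ne_zero m hq0),
      fun h => hz2' (2 * m) (by linear_combination h), fun b hb => ?_,
      invSeparated_ofFn hx0 hx2 hxx⟩
    obtain ⟨i, rfl⟩ := List.mem_ofFn.1 (Multiset.mem_coe.1 hb)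
    exact ⟨(hzx' i m).2, fun h => (hzx' i m).1 (by linear_combination h)⟩
  have hs0 : InvSeparated (z ::ₘ (List.ofFn x : Multiset F)) := by simpa using hs 0
  refine (signSum_ofFn q (fun a => (1 - q ^ r * z * a⁻¹) / (1 - z * a⁻¹)) x).symm.trans
    (mul_left_cancel₀ (prod_pairFactor_ne_zero hs0) ?_)
  rw [← signSum_pairFactor_eq_prod_mul q (q ^ r * z) hs0,
    signSum_pairFactor hq0 hq' hz2' (by simpa using hr) hs, signSumSeries_ofFn r hx0 hz1' hzx',
    signSumPrefactor]
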